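/- Unconditional covering upper bound: Under Assumptions I on the codebook structure, for any 0 < ε < 1, P(Z = 0) ≤ (1/ε) P(F^c) + (1/(1−ε)) |M|^{−1} e^{γ} + (1/(1−ε)²) ∑_{∅⊊S⊊[k]} |M_S|^{−1} e^{−α_S − 2β_{S^c} + 2γ}, where Z is the number of m ∈ M = ∏_j [M_j] such that (U₀, U₁(m₁),…,U_k(m_k), U_{k+1}) ∈ F. -/

import Mathlib

open Finset Real

/-- Marginal of the joint pmf `p` onto `(u₀, (u_j)_{j∈S}, u_{k+1})`,
evaluated at a full tuple `z`. -/
def cvMargS {k : ℕ} {Ω₀ B : Type*} {A : Fin k → Type*}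
    [Fintype Ω₀] [Fintype B] [∀ j, Fintype (A j)]
    [DecidableEq Ω₀] [DecidableEq B] [∀ j, DecidableEq (A j)]
    (p : Ω₀ × (∀ j, A j) × B → ℝ) (S : Finset (Fin k))
    (z : Ω₀ × (∀ j, A j) × B) : ℝ :=
  ∑ w ∈ Finset.univ.filter (fun w : Ω₀ × (∀ j, A j) × B =>
    w.1 = z.1 ∧ (∀ j ∈ S, w.2.1 j = z.2.1 j) ∧ w.2.2 = z.2.2), p w

/-- Projection `F_S` of `F` onto the `(u₀, u_S, u_{k+1})` coordinates. -/
def cvProjS {k : ℕ} {Ω₀ B : Type*} {A : Fin k → Type*}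
    (F : Set (Ω₀ × (∀ j, A j) × B)) (S : Finset (Fin k)) :
    Set (Ω₀ × (∀ j, A j) × B) :=
  {z | ∃ y : ∀ j, A j, (∀ j ∈ S, y j = z.2.1 j) ∧ (z.1, y, z.2.2) ∈ F}

/-!
Condition on `(U₀, U_{k+1}) = (a, b)`. If the conditional probability of `F` is below `1 - ε`, bound
the conditional probability of `Z = 0` by `1`; Markov's inequality shows that these pairs have total
mass at most `P(Fᶜ) / ε`. On the other pairs, apply Chebyshev's inequality to `Z`. Its conditional
mean is `|M| Q`, where `Q` is the probability of `F` under the product law, and the first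
change-of-measure bound gives `Q ≥ (1 - ε) e^{-γ}`. Its second moment is a sum over pairs `(m, m')`
that depends only on the agreement set `S`: there are at most `|M|² / |M_S|` pairs for each `S`, the
term `S = ∅` is cancelled by the squared mean, `S = [k]` gives `Q`, and for the other `S` the bounds
for `α` and `β` (the latter used for both codeword tuples) give `e^{-α_S - 2β_{Sᶜ}}`.
-/

section SecondMoment

variable {Ω : Type*} [Fintype Ω]

lemma sq_mean_mul_sum_eq_zero_le {ν Z : Ω → ℝ} [DecidablePred fun ω => Z ω = 0]
    (hν : ∀ ω, 0 ≤ ν ω) (hν_sum : ∑ ω, ν ω = 1) :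
    (∑ ω, ν ω * Z ω) ^ 2 * ∑ ω with Z ω = 0, ν ω ≤
      ∑ ω, ν ω * Z ω ^ 2 - (∑ ω, ν ω * Z ω) ^ 2 := by
  set c := ∑ ω, ν ω * Z ω with hc
  calc c ^ 2 * ∑ ω with Z ω = 0, ν ω
      = ∑ ω with Z ω = 0, ν ω * (Z ω - c) ^ 2 := by
        rw [mul_sum]
        refine sum_congr rfl fun ω hω => ?_
        rw [(mem_filter.1 hω).2]
        ring
    _ ≤ ∑ ω, ν ω * (Z ω - c) ^ 2 :=
        sum_le_univ_sum_of_nonneg fun ω => mul_nonneg (hν ω) (sq_nonneg _)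
    _ = ∑ ω, (ν ω * Z ω ^ 2 - 2 * c * (ν ω * Z ω) + c ^ 2 * ν ω) :=
        sum_congr rfl fun ω _ => by ring
    _ = ∑ ω, ν ω * Z ω ^ 2 - c ^ 2 := by
        rw [sum_add_distrib, sum_sub_distrib, ← mul_sum, ← mul_sum, hν_sum, ← hc]
        ring

variable {I : Type*} [Fintype I]

lemma sum_mul_card_filter (ν : Ω → ℝ) (E : I → Ω → Prop) [∀ i ω, Decidable (E i ω)] :
    ∑ ω, ν ω * (#{i | E i ω} : ℝ) = ∑ i, ∑ ω with E i ω, ν ω := by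
  simp only [card_filter, Nat.cast_sum, Nat.cast_ite, Nat.cast_one, Nat.cast_zero, mul_sum,
    mul_ite, mul_one, mul_zero, sum_filter]
  exact sum_comm

lemma sum_mul_card_filter_sq (ν : Ω → ℝ) (E : I → Ω → Prop) [∀ i ω, Decidable (E i ω)] :
    ∑ ω, ν ω * (#{i | E i ω} : ℝ) ^ 2 = ∑ i, ∑ i', ∑ ω with E i ω ∧ E i' ω, ν ω := by
  have hsq (ω : Ω) : (#{i | E i ω} : ℝ) ^ 2 = #{ii : I × I | E ii.1 ω ∧ E ii.2 ω} := by
    rw [← univ_product_univ, filter_product (E · ω) (E · ω), card_product, sq, Nat.cast_mul]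
  simp_rw [hsq]
  rw [sum_mul_card_filter ν (fun (ii : I × I) ω => E ii.1 ω ∧ E ii.2 ω), Fintype.sum_prod_type]

lemma sum_filter_mem_and_mem {X : Type*} [DecidableEq X] (ν : Ω → ℝ) (f g : Ω → X)
    (F : Finset X) :
    ∑ ω with f ω ∈ F ∧ g ω ∈ F, ν ω =
      ∑ x ∈ F, ∑ x' ∈ F, ∑ ω with f ω = x ∧ g ω = x', ν ω := by
  simp only [sum_filter, ite_and]
  simp_rw [fun x => sum_comm (s := F) (t := univ) (f := fun x' ω =>
    if f ω = x then if g ω = x' then ν ω else 0 else 0)]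
  rw [sum_comm]
  simp

/-- Markov's inequality for the conditional failure probabilities `fail i / r i`: the total mass of
the slices on which they are at least `ε` is at most `(∑ i, fail i) / ε`. -/
lemma sum_le_of_le_on_good {miss fail r : I → ℝ} {ε K : ℝ} (hε : 0 < ε) (hK : 0 ≤ K)
    (hfail : ∀ i, 0 ≤ fail i) (hr : ∀ i, 0 ≤ r i) (hmiss : ∀ i, miss i ≤ r i)
    (hgood : ∀ i, fail i < ε * r i → miss i ≤ r i * K) :
    ∑ i, miss i ≤ 1 / ε * ∑ i, fail i + (∑ i, r i) * K := by
  rw [mul_sum, sum_mul, ← sum_add_distrib]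
  refine sum_le_sum fun i _ => ?_
  have hrK : 0 ≤ r i * K := mul_nonneg (hr i) hK
  have hfail_div : 0 ≤ 1 / ε * fail i := mul_nonneg (by positivity) (hfail i)
  rcases lt_or_ge (fail i) (ε * r i) with hlt | hge
  · linarith [hgood i hlt]
  · have hr_le : r i ≤ 1 / ε * fail i := by
      rwa [one_div, ← div_eq_inv_mul, le_div_iff₀' hε]
    linarith [hmiss i]

end SecondMoment

section Agreement

variable {ι : Type*} [Fintype ι]

variable {κ : ι → Type*} [∀ j, DecidableEq (κ j)]

/-- The set `S` of coordinates on which two message tuples `m` and `m'` agree. -/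
def agreementSet (m m' : ∀ j, κ j) : Finset ι := {j | m j = m' j}

lemma mem_agreementSet {m m' : ∀ j, κ j} {j : ι} : j ∈ agreementSet m m' ↔ m j = m' j := by
  simp [agreementSet]

variable [DecidableEq ι]

lemma sum_finset_le_empty_add_univ_add {g : Finset ι → ℝ} (hg : ∀ S, 0 ≤ g S) :
    ∑ S, g S ≤ g ∅ + g univ + ∑ S with S.Nonempty ∧ S ≠ univ, g S := by
  have hextreme : ({S | ¬(S.Nonempty ∧ S ≠ univ)} : Finset (Finset ι)) ⊆ {∅, univ} := by
    intro S
    simp only [mem_filter, mem_univ, true_and, not_and_or, not_nonempty_iff_eq_empty, not_not,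
      mem_insert, mem_singleton, imp_self]
  have hpair : ∑ S ∈ {∅, univ}, g S ≤ g ∅ + g univ := by
    rcases eq_or_ne (∅ : Finset ι) univ with h | h
    · simp [← h, hg]
    · rw [sum_pair h]
  rw [← sum_filter_add_sum_filter_not univ (fun S : Finset ι => S.Nonempty ∧ S ≠ univ), add_comm]
  gcongr
  exact (sum_le_sum_of_subset_of_nonneg hextreme fun S _ _ => hg S).trans hpair

variable [∀ j, Fintype (κ j)]

lemma card_agreementSet_eq_le (m : ∀ j, κ j) (S : Finset ι) :
    #{m' | agreementSet m m' = S} ≤ ∏ j ∈ Sᶜ, Fintype.card (κ j) := by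
  have hsub : ({m' | agreementSet m m' = S} : Finset (∀ j, κ j)) ⊆
      Fintype.piFinset fun j => if j ∈ S then {m j} else univ := by
    intro m' hm'
    obtain rfl := (mem_filter.1 hm').2
    rw [Fintype.mem_piFinset]
    intro j
    split_ifs with hj
    · exact mem_singleton.2 (mem_agreementSet.1 hj).symm
    · exact mem_univ _
  refine (card_le_card hsub).trans_eq ?_
  simp only [Fintype.card_piFinset, apply_ite card, card_singleton, card_univ]
  rw [← prod_mul_prod_compl S, prod_congr rfl fun j hj => if_pos hj, prod_const_one, one_mul]
  exact prod_congr rfl fun j hj => if_neg (mem_compl.1 hj)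

lemma card_agreementSet_eq_mul_prod_le (S : Finset ι) :
    #{mm : (∀ j, κ j) × (∀ j, κ j) | agreementSet mm.1 mm.2 = S} * ∏ j ∈ S, Fintype.card (κ j) ≤
      (∏ j, Fintype.card (κ j)) ^ 2 := by
  calc #{mm : (∀ j, κ j) × (∀ j, κ j) | agreementSet mm.1 mm.2 = S} * ∏ j ∈ S, Fintype.card (κ j)
      = (∑ m : ∀ j, κ j, #{m' | agreementSet m m' = S}) * ∏ j ∈ S, Fintype.card (κ j) := by
        simp only [card_filter, Fintype.sum_prod_type]
    _ ≤ (∑ _m : ∀ j, κ j, ∏ j ∈ Sᶜ, Fintype.card (κ j)) * ∏ j ∈ S, Fintype.card (κ j) := by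
        gcongr with m
        exact card_agreementSet_eq_le m S
    _ = (∏ j, Fintype.card (κ j)) ^ 2 := by
        rw [sum_const, card_univ, Fintype.card_pi, smul_eq_mul, mul_assoc, prod_compl_mul_prod, sq]

lemma sum_agreementSet_le [∀ j, Nonempty (κ j)] {g : Finset ι → ℝ} (hg : ∀ S, 0 ≤ g S) :
    ∑ m : ∀ j, κ j, ∑ m' : ∀ j, κ j, g (agreementSet m m') ≤
      (∏ j, (Fintype.card (κ j) : ℝ)) ^ 2 *
        ∑ S, (∏ j ∈ S, (Fintype.card (κ j) : ℝ))⁻¹ * g S := by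
  rw [← Fintype.sum_prod_type' (fun m m' : ∀ j, κ j => g (agreementSet m m')),
    ← sum_fiberwise' univ (fun mm : (∀ j, κ j) × (∀ j, κ j) => agreementSet mm.1 mm.2) g, mul_sum]
  refine sum_le_sum fun S _ => ?_
  have hcard_pos : 0 < ∏ j ∈ S, (Fintype.card (κ j) : ℝ) :=
    prod_pos fun j _ => Nat.cast_pos.2 Fintype.card_pos
  rw [sum_const, nsmul_eq_mul, ← mul_assoc]
  refine mul_le_mul_of_nonneg_right ?_ (hg S)
  rw [← div_eq_mul_inv, le_div_iff₀ hcard_pos]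
  exact_mod_cast card_agreementSet_eq_mul_prod_le S

end Agreement

section Weights

variable {ι : Type*} [Fintype ι] {A : ι → Type*}

/-- The probability of `F` when the coordinates `x j` are independent with laws `q j`. -/
def productWeight (q : ∀ j, A j → ℝ) (F : Finset (∀ j, A j)) : ℝ :=
  ∑ x ∈ F, ∏ j, q j (x j)

variable [DecidableEq ι] [∀ j, DecidableEq (A j)]

/-- The probability that `x` and `x'` both lie in `F`, when `x` has independent coordinates with
laws `q j`, and `x'` shares the coordinates in `S` with `x` and redraws the others
independently. -/
def pairWeight (q : ∀ j, A j → ℝ) (F : Finset (∀ j, A j)) (S : Finset ι) : ℝ :=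
  ∑ x ∈ F, ∑ x' ∈ F with ∀ j ∈ S, x' j = x j, (∏ j, q j (x j)) * ∏ j ∈ Sᶜ, q j (x' j)

lemma pairWeight_empty (q : ∀ j, A j → ℝ) (F : Finset (∀ j, A j)) :
    pairWeight q F ∅ = productWeight q F ^ 2 := by
  simp [pairWeight, productWeight, sq, sum_mul_sum]

lemma pairWeight_univ (q : ∀ j, A j → ℝ) (F : Finset (∀ j, A j)) :
    pairWeight q F univ = productWeight q F := by
  refine sum_congr rfl fun x hx => ?_
  simp [← funext_iff, filter_eq', hx]

lemma pairWeight_nonneg {q : ∀ j, A j → ℝ} (hq : ∀ j a, 0 ≤ q j a) (F : Finset (∀ j, A j))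
    (S : Finset ι) : 0 ≤ pairWeight q F S :=
  sum_nonneg fun _ _ => sum_nonneg fun _ _ =>
    mul_nonneg (prod_nonneg fun _ _ => hq _ _) (prod_nonneg fun _ _ => hq _ _)

variable [∀ j, Fintype (A j)]

/-- The marginal of `P` on the coordinates in `S`, evaluated at the full tuple `x`. -/
def marginalWeight (P : (∀ j, A j) → ℝ) (S : Finset ι) (x : ∀ j, A j) : ℝ :=
  ∑ y with ∀ j ∈ S, y j = x j, P y

lemma marginalWeight_congr (P : (∀ j, A j) → ℝ) {S : Finset ι} {x x' : ∀ j, A j}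
    (h : ∀ j ∈ S, x' j = x j) : marginalWeight P S x' = marginalWeight P S x := by
  refine sum_congr (filter_congr fun y _ => forall₂_congr fun j hj => ?_) fun _ _ => rfl
  rw [h j hj]

variable {q : ∀ j, A j → ℝ} {P : (∀ j, A j) → ℝ} {F : Finset (∀ j, A j)} {S : Finset ι} {a b : ℝ}

lemma mul_marginalWeight_mul_sum_le (hP : ∀ x, 0 ≤ P x)
    (hb : ∀ x ∈ F, b * (marginalWeight P S x * ∏ j ∈ Sᶜ, q j (x j)) ≤ P x) (x : ∀ j, A j) :
    b * (marginalWeight P S x * ∑ x' ∈ F with ∀ j ∈ S, x' j = x j, ∏ j ∈ Sᶜ, q j (x' j)) ≤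
      marginalWeight P S x := by
  rw [mul_sum, mul_sum]
  calc ∑ x' ∈ F with ∀ j ∈ S, x' j = x j, b * (marginalWeight P S x * ∏ j ∈ Sᶜ, q j (x' j))
      ≤ ∑ x' ∈ F with ∀ j ∈ S, x' j = x j, P x' := by
        refine sum_le_sum fun x' hx' => ?_
        obtain ⟨hx'F, hagree⟩ := mem_filter.1 hx'
        rw [← marginalWeight_congr P hagree]
        exact hb x' hx'F
    _ ≤ marginalWeight P S x :=
        sum_le_sum_of_subset_of_nonneg (filter_subset_filter _ (subset_univ F)) fun y _ _ => hP y

lemma mul_sq_mul_pairWeight_le_sum (hq : ∀ j a, 0 ≤ q j a) (hP : ∀ x, 0 ≤ P x) (hb0 : 0 ≤ b)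
    (ha : ∀ x ∈ F, a * ∏ j ∈ S, q j (x j) ≤ marginalWeight P S x)
    (hb : ∀ x ∈ F, b * (marginalWeight P S x * ∏ j ∈ Sᶜ, q j (x j)) ≤ P x) :
    a * b ^ 2 * pairWeight q F S ≤ ∑ x ∈ F, P x := by
  rw [pairWeight, mul_sum]
  refine sum_le_sum fun x hx => ?_
  rw [← mul_sum, ← prod_mul_prod_compl S]
  have hin : 0 ≤ ∏ j ∈ Sᶜ, q j (x j) := prod_nonneg fun j _ => hq j _
  have hfiber := mul_marginalWeight_mul_sum_le hP hb x
  have hfiber_nonneg : 0 ≤ ∑ x' ∈ F with ∀ j ∈ S, x' j = x j, ∏ j ∈ Sᶜ, q j (x' j) :=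
    sum_nonneg fun x' _ => prod_nonneg fun j _ => hq j _
  set I := ∑ x' ∈ F with ∀ j ∈ S, x' j = x j, ∏ j ∈ Sᶜ, q j (x' j)
  set inside := ∏ j ∈ S, q j (x j)
  set outside := ∏ j ∈ Sᶜ, q j (x j)
  calc a * b ^ 2 * (inside * outside * I)
      = a * inside * (b * I) * (b * outside) := by ring
    _ ≤ marginalWeight P S x * (b * I) * (b * outside) := by gcongr; exact ha x hx
    _ = b * (marginalWeight P S x * I) * (b * outside) := by ring
    _ ≤ marginalWeight P S x * (b * outside) := by gcongr
    _ = b * (marginalWeight P S x * outside) := by ring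
    _ ≤ P x := hb x hx

/-- The change-of-measure bounds, with constants `γ`, `α S` and `β Sᶜ`, comparing on `F` a law `P`
and its marginals with the product of the laws `q j`. -/
structure ChangeOfMeasureBounds (P : (∀ j, A j) → ℝ) (q : ∀ j, A j → ℝ) (F : Finset (∀ j, A j))
    (γ : ℝ) (α β : Finset ι → ℝ) : Prop where
  le_mul_prod : ∀ x ∈ F, P x ≤ exp γ * ∏ j, q j (x j)
  mul_prod_le_marginalWeight : ∀ S : Finset ι, S.Nonempty → S ≠ univ → ∀ x ∈ F,
    exp (α S) * ∏ j ∈ S, q j (x j) ≤ marginalWeight P S x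
  mul_marginalWeight_mul_prod_le : ∀ S : Finset ι, S.Nonempty → S ≠ univ → ∀ x ∈ F,
    exp (β Sᶜ) * (marginalWeight P S x * ∏ j ∈ Sᶜ, q j (x j)) ≤ P x

namespace ChangeOfMeasureBounds

variable {γ δ : ℝ} {α β : Finset ι → ℝ}

lemma sum_le_exp_mul_productWeight (h : ChangeOfMeasureBounds P q F γ α β) :
    ∑ x ∈ F, P x ≤ exp γ * productWeight q F := by
  rw [productWeight, mul_sum]
  exact sum_le_sum h.le_mul_prod

lemma pairWeight_le (h : ChangeOfMeasureBounds P q F γ α β) (hq : ∀ j a, 0 ≤ q j a)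
    (hP : ∀ x, 0 ≤ P x) (hP_sum : ∑ x, P x = 1) (hS : S.Nonempty) (hS_univ : S ≠ univ) :
    pairWeight q F S ≤ exp (-α S - 2 * β Sᶜ) := by
  have hmul : exp (α S) * exp (β Sᶜ) ^ 2 * pairWeight q F S ≤ 1 :=
    (mul_sq_mul_pairWeight_le_sum hq hP (exp_pos _).le (h.mul_prod_le_marginalWeight S hS hS_univ)
      (h.mul_marginalWeight_mul_prod_le S hS hS_univ)).trans
        (hP_sum ▸ sum_le_univ_sum_of_nonneg hP)
  have hexp : exp (-α S - 2 * β Sᶜ) = 1 / (exp (α S) * exp (β Sᶜ) ^ 2) := by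
    rw [← exp_nat_mul, ← exp_add, one_div, ← exp_neg]
    push_cast
    ring_nf
  rw [hexp, le_div_iff₀' (by positivity)]
  exact hmul

lemma productWeight_pos (h : ChangeOfMeasureBounds P q F γ α β) (hF : 0 < ∑ x ∈ F, P x) :
    0 < productWeight q F :=
  pos_of_mul_pos_right (hF.trans_le h.sum_le_exp_mul_productWeight) (exp_pos γ).le

lemma inv_productWeight_le (h : ChangeOfMeasureBounds P q F γ α β) (hδ : 0 < δ)
    (hF : δ ≤ ∑ x ∈ F, P x) : (productWeight q F)⁻¹ ≤ 1 / δ * exp γ := by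
  have hδQ : δ ≤ exp γ * productWeight q F := hF.trans h.sum_le_exp_mul_productWeight
  rw [inv_eq_one_div, div_mul_eq_mul_div, one_mul,
    div_le_div_iff₀ (h.productWeight_pos (hδ.trans_le hF)) hδ, one_mul]
  exact hδQ

lemma pairWeight_mul_inv_sq_le (h : ChangeOfMeasureBounds P q F γ α β) (hq : ∀ j a, 0 ≤ q j a)
    (hP : ∀ x, 0 ≤ P x) (hP_sum : ∑ x, P x = 1) (hS : S.Nonempty) (hS_univ : S ≠ univ)
    (hδ : 0 < δ) (hF : δ ≤ ∑ x ∈ F, P x) :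
    pairWeight q F S * (productWeight q F)⁻¹ ^ 2 ≤
      (1 / δ) ^ 2 * exp (-α S - 2 * β Sᶜ + 2 * γ) :=
  have hQ : 0 < productWeight q F := h.productWeight_pos (hδ.trans_le hF)
  calc pairWeight q F S * (productWeight q F)⁻¹ ^ 2
      ≤ exp (-α S - 2 * β Sᶜ) * (1 / δ * exp γ) ^ 2 := by
        gcongr
        · exact h.pairWeight_le hq hP hP_sum hS hS_univ
        · exact h.inv_productWeight_le hδ hF
    _ = (1 / δ) ^ 2 * exp (-α S - 2 * β Sᶜ + 2 * γ) := by
        rw [exp_add, mul_comm 2 γ, exp_mul, rpow_two]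
        ring

end ChangeOfMeasureBounds

end Weights

section Codebook

variable {ι : Type*} {A κ : ι → Type*}

/-- The codeword tuple `(U_j(m_j))_j` that the codebook `w` assigns to the message tuple `m`. -/
def codeword (w : ∀ j, κ j → A j) (m : ∀ j, κ j) : ∀ j, A j := fun j => w j (m j)

variable [Fintype ι] [DecidableEq ι] [∀ j, DecidableEq (A j)] [∀ j, Fintype (κ j)]

/-- The number `Z` of message tuples whose codeword tuple lies in `F`. -/
def hitCount (F : Finset (∀ j, A j)) (w : ∀ j, κ j → A j) : ℕ :=
  #{m | codeword w m ∈ F}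

lemma hitCount_eq_zero_iff {F : Finset (∀ j, A j)} {w : ∀ j, κ j → A j} :
    hitCount F w = 0 ↔ ∀ m, codeword w m ∉ F := by
  simp [hitCount, filter_eq_empty_iff]

variable [∀ j, Fintype (A j)] [∀ j, DecidableEq (κ j)]

/-- Assumption I, conditionally on `(U₀, U_{k+1})`: `ν` is the pmf of a random codebook such that,
for all message tuples `m` and `m'`, the first codeword tuple has law `∏ j, q j` and the second one
redraws independently the coordinates outside the agreement set. The case `m = m'` is the law of a
single codeword tuple. -/
structure IsCodebookLaw (q : ∀ j, A j → ℝ) (ν : (∀ j, κ j → A j) → ℝ) : Prop where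
  nonneg : ∀ w, 0 ≤ ν w
  sum_eq_one : ∑ w, ν w = 1
  pair_law : ∀ (m m' : ∀ j, κ j) (x x' : ∀ j, A j), (∀ j ∈ agreementSet m m', x' j = x j) →
    ∑ w with codeword w m = x ∧ codeword w m' = x', ν w =
      (∏ j, q j (x j)) * ∏ j ∈ (agreementSet m m')ᶜ, q j (x' j)

/-- The right-hand side of the conditional covering bound, where `δ` is a lower bound for the
conditional probability of `F`. -/
noncomputable def coveringBound (M : ι → ℕ) (γ : ℝ) (α β : Finset ι → ℝ) (δ : ℝ) : ℝ :=
  1 / δ * (∏ j, (M j : ℝ))⁻¹ * exp γ + (1 / δ) ^ 2 *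
    ∑ S with S.Nonempty ∧ S ≠ univ, (∏ j ∈ S, (M j : ℝ))⁻¹ * exp (-α S - 2 * β Sᶜ + 2 * γ)

lemma coveringBound_nonneg (M : ι → ℕ) (γ : ℝ) (α β : Finset ι → ℝ) {δ : ℝ} (hδ : 0 ≤ δ) :
    0 ≤ coveringBound M γ α β δ := by
  unfold coveringBound
  positivity

namespace IsCodebookLaw

variable {q : ∀ j, A j → ℝ} {ν : (∀ j, κ j → A j) → ℝ} (h : IsCodebookLaw q ν)
include h

lemma sum_codeword_mem_and_mem (F : Finset (∀ j, A j)) (m m' : ∀ j, κ j) :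
    ∑ w with codeword w m ∈ F ∧ codeword w m' ∈ F, ν w = pairWeight q F (agreementSet m m') := by
  rw [sum_filter_mem_and_mem ν (codeword · m) (codeword · m')]
  refine sum_congr rfl fun x _ => ?_
  rw [sum_filter]
  refine sum_congr rfl fun x' _ => ?_
  split_ifs with hagree
  · exact h.pair_law m m' x x' hagree
  · refine sum_eq_zero fun w hw => absurd (fun j hj => ?_) hagree
    obtain ⟨rfl, rfl⟩ := (mem_filter.1 hw).2
    rw [codeword, codeword, mem_agreementSet.1 hj]

lemma sum_codeword_mem (F : Finset (∀ j, A j)) (m : ∀ j, κ j) :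
    ∑ w with codeword w m ∈ F, ν w = productWeight q F := by
  simpa [agreementSet, pairWeight_univ] using h.sum_codeword_mem_and_mem F m m

lemma sum_mul_hitCount (F : Finset (∀ j, A j)) :
    ∑ w, ν w * hitCount F w = (∏ j, (Fintype.card (κ j) : ℝ)) * productWeight q F := by
  simp [hitCount, sum_mul_card_filter, h.sum_codeword_mem, Fintype.card_pi]

lemma sum_mul_hitCount_sq (F : Finset (∀ j, A j)) :
    ∑ w, ν w * (hitCount F w : ℝ) ^ 2 =
      ∑ m : ∀ j, κ j, ∑ m', pairWeight q F (agreementSet m m') := by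
  simp only [hitCount, sum_mul_card_filter_sq, h.sum_codeword_mem_and_mem]

variable [∀ j, Nonempty (κ j)]

lemma sq_productWeight_mul_sum_hitCount_eq_zero_le (hq : ∀ j a, 0 ≤ q j a)
    (F : Finset (∀ j, A j)) :
    productWeight q F ^ 2 * ∑ w with hitCount F w = 0, ν w ≤
      (∏ j, (Fintype.card (κ j) : ℝ))⁻¹ * productWeight q F +
        ∑ S with S.Nonempty ∧ S ≠ univ,
          (∏ j ∈ S, (Fintype.card (κ j) : ℝ))⁻¹ * pairWeight q F S := by
  set N := ∏ j, (Fintype.card (κ j) : ℝ) with hN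
  set g : Finset ι → ℝ := fun S =>
    (∏ j ∈ S, (Fintype.card (κ j) : ℝ))⁻¹ * pairWeight q F S with hg
  have hN_pos : 0 < N := prod_pos fun j _ => Nat.cast_pos.2 Fintype.card_pos
  have hg_nonneg (S : Finset ι) : 0 ≤ g S :=
    mul_nonneg (by positivity) (pairWeight_nonneg hq F S)
  have hg_sum := sum_finset_le_empty_add_univ_add hg_nonneg
  have hg_empty : g ∅ = productWeight q F ^ 2 := by simp [hg, pairWeight_empty]
  have hg_univ : g univ = N⁻¹ * productWeight q F := by simp only [hg, pairWeight_univ, hN]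
  have hsecond_moment : ∑ w, ν w * (hitCount F w : ℝ) ^ 2 ≤ N ^ 2 * ∑ S, g S :=
    (h.sum_mul_hitCount_sq F).trans_le (sum_agreementSet_le (pairWeight_nonneg hq F))
  have hchebyshev := sq_mean_mul_sum_eq_zero_le (Z := fun w => (hitCount F w : ℝ))
    h.nonneg h.sum_eq_one
  simp only [h.sum_mul_hitCount F, Nat.cast_eq_zero, ← hN] at hchebyshev
  refine le_of_mul_le_mul_left ?_ (pow_pos hN_pos 2)
  calc N ^ 2 * (productWeight q F ^ 2 * ∑ w with hitCount F w = 0, ν w)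
      ≤ N ^ 2 * ∑ S, g S - (N * productWeight q F) ^ 2 := by linarith
    _ = N ^ 2 * (∑ S, g S - g ∅) := by rw [hg_empty]; ring
    _ ≤ N ^ 2 * (N⁻¹ * productWeight q F + ∑ S with S.Nonempty ∧ S ≠ univ, g S) := by
        gcongr
        linarith

lemma sum_hitCount_eq_zero_le_coveringBound {P : (∀ j, A j) → ℝ} {F : Finset (∀ j, A j)}
    {γ δ : ℝ} {α β : Finset ι → ℝ} (hq : ∀ j a, 0 ≤ q j a) (hP : ∀ x, 0 ≤ P x)
    (hP_sum : ∑ x, P x = 1) (hbounds : ChangeOfMeasureBounds P q F γ α β) (hδ : 0 < δ)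
    (hF : δ ≤ ∑ x ∈ F, P x) :
    ∑ w with hitCount F w = 0, ν w ≤
      coveringBound (fun j => Fintype.card (κ j)) γ α β δ := by
  set Q := productWeight q F
  have hQ : 0 < Q := hbounds.productWeight_pos (hδ.trans_le hF)
  calc ∑ w with hitCount F w = 0, ν w
      = Q⁻¹ ^ 2 * (Q ^ 2 * ∑ w with hitCount F w = 0, ν w) := by field_simp
    _ ≤ Q⁻¹ ^ 2 * ((∏ j, (Fintype.card (κ j) : ℝ))⁻¹ * Q + ∑ S with S.Nonempty ∧ S ≠ univ,
          (∏ j ∈ S, (Fintype.card (κ j) : ℝ))⁻¹ * pairWeight q F S) := by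
        gcongr
        exact h.sq_productWeight_mul_sum_hitCount_eq_zero_le hq F
    _ = (∏ j, (Fintype.card (κ j) : ℝ))⁻¹ * Q⁻¹ + ∑ S with S.Nonempty ∧ S ≠ univ,
          (∏ j ∈ S, (Fintype.card (κ j) : ℝ))⁻¹ * (pairWeight q F S * Q⁻¹ ^ 2) := by
        rw [mul_add, mul_sum]
        congr 1
        · field_simp
        · exact sum_congr rfl fun S _ => by ring
    _ ≤ (∏ j, (Fintype.card (κ j) : ℝ))⁻¹ * (1 / δ * exp γ) + ∑ S with S.Nonempty ∧ S ≠ univ,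
          (∏ j ∈ S, (Fintype.card (κ j) : ℝ))⁻¹ *
            ((1 / δ) ^ 2 * exp (-α S - 2 * β Sᶜ + 2 * γ)) := by
        refine add_le_add ?_ (sum_le_sum fun S hS => ?_)
        · gcongr
          exact hbounds.inv_productWeight_le hδ hF
        · obtain ⟨-, hS_nonempty, hS_univ⟩ := mem_filter.1 hS
          refine mul_le_mul_of_nonneg_left ?_ (by positivity)
          exact hbounds.pairWeight_mul_inv_sq_le hq hP hP_sum hS_nonempty hS_univ hδ hF
    _ = coveringBound (fun j => Fintype.card (κ j)) γ α β δ := by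
        rw [coveringBound, mul_sum]
        congr 1
        · ring
        · exact sum_congr rfl fun S _ => by ring

end IsCodebookLaw

end Codebook

section Slices

variable {Ω₀ X B : Type*} [Fintype X]

/-- The mass that `f` gives to the slice of triples with outer coordinates `a` and `b`. -/
def sliceMass (f : Ω₀ × X × B → ℝ) (a : Ω₀) (b : B) : ℝ := ∑ x, f (a, x, b)

/-- The conditional pmf of the middle coordinate given the outer ones; it is identically zero on a
slice of mass zero. -/
noncomputable def condSlice (f : Ω₀ × X × B → ℝ) (a : Ω₀) (b : B) (x : X) : ℝ :=
  f (a, x, b) / sliceMass f a b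

open scoped Classical in
/-- The section of `F` over the outer coordinates `a` and `b`. -/
noncomputable def sliceFinset (F : Set (Ω₀ × X × B)) (a : Ω₀) (b : B) : Finset X :=
  {x | (a, x, b) ∈ F}

lemma mem_sliceFinset {F : Set (Ω₀ × X × B)} {a : Ω₀} {b : B} {x : X} :
    x ∈ sliceFinset F a b ↔ (a, x, b) ∈ F := by
  simp [sliceFinset]

variable {f : Ω₀ × X × B → ℝ} {a : Ω₀} {b : B}

lemma condSlice_nonneg (hf : ∀ z, 0 ≤ f z) (x : X) : 0 ≤ condSlice f a b x :=
  div_nonneg (hf _) (sum_nonneg fun _ _ => hf _)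

lemma sum_condSlice (s : Finset X) :
    ∑ x ∈ s, condSlice f a b x = (∑ x ∈ s, f (a, x, b)) / sliceMass f a b :=
  (sum_div s _ _).symm

lemma sum_condSlice_eq_one (h : sliceMass f a b ≠ 0) : ∑ x, condSlice f a b x = 1 := by
  rw [sum_condSlice]
  exact div_self h

variable [Fintype Ω₀] [Fintype B]

lemma sum_filter_slice (f : Ω₀ × X × B → ℝ) (a : Ω₀) (b : B) (P : X → Prop) [DecidablePred P]
    {R : Ω₀ × X × B → Prop} [DecidablePred R]
    (hR : ∀ z, R z ↔ z.1 = a ∧ P z.2.1 ∧ z.2.2 = b) :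
    ∑ z with R z, f z = ∑ x with P x, f (a, x, b) := by
  refine (sum_nbij' (fun x => (a, x, b)) (fun z => z.2.1) ?_ ?_ ?_ ?_ ?_).symm <;> aesop

lemma sum_filter_eq_sum_slices (f : Ω₀ × X × B → ℝ) (R : Ω₀ × X × B → Prop) [DecidablePred R] :
    ∑ z with R z, f z = ∑ i : Ω₀ × B, ∑ x with R (i.1, x, i.2), f (i.1, x, i.2) := by
  simp only [sum_filter, Fintype.sum_prod_type]
  exact sum_congr rfl fun a _ => sum_comm

end Slices

section CoveringSlice

variable {ι : Type*} [Fintype ι] [DecidableEq ι] {Ω₀ B : Type*} {A κ : ι → Type*}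
  [∀ j, Fintype (A j)] [∀ j, DecidableEq (A j)] [∀ j, Fintype (κ j)] [∀ j, DecidableEq (κ j)]

open scoped Classical in
lemma sum_miss_slice_le [∀ j, Nonempty (κ j)] {q : ∀ j, A j → ℝ}
    {p : Ω₀ × (∀ j, A j) × B → ℝ} {μ : Ω₀ × (∀ j, κ j → A j) × B → ℝ} {a : Ω₀} {b : B}
    {F : Set (Ω₀ × (∀ j, A j) × B)} {γ ε : ℝ} {α β : Finset ι → ℝ}
    (hq : ∀ j x, 0 ≤ q j x) (hp : ∀ z, 0 ≤ p z)
    (hcode : IsCodebookLaw q (condSlice μ a b))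
    (hbounds : ChangeOfMeasureBounds (condSlice p a b) q (sliceFinset F a b) γ α β)
    (hmass : sliceMass μ a b = sliceMass p a b) (hmass_pos : 0 < sliceMass p a b) (hε : ε < 1)
    (hgood : ∑ x with (a, x, b) ∉ F, p (a, x, b) < ε * sliceMass p a b) :
    ∑ w with ∀ m : ∀ j, κ j, (a, fun j => w j (m j), b) ∉ F, μ (a, w, b) ≤
      sliceMass p a b * coveringBound (fun j => Fintype.card (κ j)) γ α β (1 - ε) := by
  have hF : 1 - ε ≤ ∑ x ∈ sliceFinset F a b, condSlice p a b x := by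
    have hsplit : ∑ x ∈ sliceFinset F a b, p (a, x, b) + ∑ x with (a, x, b) ∉ F, p (a, x, b) =
        sliceMass p a b := sum_filter_add_sum_filter_not _ _ _
    rw [sum_condSlice, le_div_iff₀ hmass_pos]
    linarith
  have hcond := hcode.sum_hitCount_eq_zero_le_coveringBound hq (condSlice_nonneg hp)
    (sum_condSlice_eq_one hmass_pos.ne') hbounds (sub_pos.2 hε) hF
  rw [sum_condSlice, hmass, div_le_iff₀' hmass_pos] at hcond
  have hmiss (w : ∀ j, κ j → A j) : hitCount (sliceFinset F a b) w = 0 ↔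
      ∀ m : ∀ j, κ j, (a, fun j => w j (m j), b) ∉ F := by
    simp only [hitCount_eq_zero_iff, mem_sliceFinset]
    rfl
  simpa only [hmiss] using hcond

end CoveringSlice

section Conditioning

variable {k : ℕ} {Ω₀ B : Type*} {A : Fin k → Type*} [Fintype Ω₀] [Fintype B]
  [∀ j, Fintype (A j)] [DecidableEq Ω₀] [DecidableEq B] [∀ j, DecidableEq (A j)]
  {p : Ω₀ × (∀ j, A j) × B → ℝ} {a : Ω₀} {b : B}

lemma cvMargS_eq_marginalWeight (p : Ω₀ × (∀ j, A j) × B → ℝ) (S : Finset (Fin k)) (a : Ω₀)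
    (x : ∀ j, A j) (b : B) :
    cvMargS p S (a, x, b) = marginalWeight (fun y => p (a, y, b)) S x := by
  rw [cvMargS, marginalWeight]
  convert sum_filter_slice p a b (fun y => ∀ j ∈ S, y j = x j) fun _ => Iff.rfl

lemma cvMargS_empty (p : Ω₀ × (∀ j, A j) × B → ℝ) (a : Ω₀) (x : ∀ j, A j) (b : B) :
    cvMargS p ∅ (a, x, b) = sliceMass p a b := by
  simp [cvMargS_eq_marginalWeight, marginalWeight, sliceMass]

lemma marginalWeight_condSlice (p : Ω₀ × (∀ j, A j) × B → ℝ) (S : Finset (Fin k)) (a : Ω₀)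
    (x : ∀ j, A j) (b : B) :
    marginalWeight (condSlice p a b) S x = cvMargS p S (a, x, b) / sliceMass p a b := by
  rw [cvMargS_eq_marginalWeight]
  exact sum_condSlice _

lemma changeOfMeasureBounds_condSlice {qj : ∀ j, Ω₀ → A j → ℝ} {F : Set (Ω₀ × (∀ j, A j) × B)}
    {γ : ℝ} {α β : Finset (Fin k) → ℝ} (hmass : 0 < sliceMass p a b)
    (hγ : ∀ z ∈ F, p z ≤ exp γ * (cvMargS p ∅ z * ∏ j, qj j z.1 (z.2.1 j)))
    (hα : ∀ S : Finset (Fin k), S.Nonempty → S ≠ univ → ∀ z ∈ cvProjS F S,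
      exp (α S) * (cvMargS p ∅ z * ∏ j ∈ S, qj j z.1 (z.2.1 j)) ≤ cvMargS p S z)
    (hβ : ∀ S : Finset (Fin k), S.Nonempty → S ≠ univ → ∀ z ∈ F,
      exp (β Sᶜ) * (cvMargS p S z * ∏ j ∈ Sᶜ, qj j z.1 (z.2.1 j)) ≤ p z) :
    ChangeOfMeasureBounds (condSlice p a b) (fun j => qj j a) (sliceFinset F a b) γ α β where
  le_mul_prod x hx := by
    have hle := hγ (a, x, b) (mem_sliceFinset.1 hx)
    rw [cvMargS_empty] at hle
    rw [condSlice, div_le_iff₀' hmass]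
    linarith
  mul_prod_le_marginalWeight S hS hS_univ x hx := by
    have hle := hα S hS hS_univ (a, x, b) ⟨x, fun _ _ => rfl, mem_sliceFinset.1 hx⟩
    rw [cvMargS_empty] at hle
    rw [marginalWeight_condSlice, le_div_iff₀' hmass]
    linarith
  mul_marginalWeight_mul_prod_le S hS hS_univ x hx := by
    have hle := hβ S hS hS_univ (a, x, b) (mem_sliceFinset.1 hx)
    rw [marginalWeight_condSlice, condSlice, div_mul_eq_mul_div, mul_div_assoc']
    gcongr

variable {κ : Fin k → Type*} [∀ j, Fintype (κ j)] [∀ j, DecidableEq (κ j)]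
  {μ : Ω₀ × (∀ j, κ j → A j) × B → ℝ} {q0 : Ω₀ → ℝ} {qj : ∀ j, Ω₀ → A j → ℝ} {qB : Ω₀ → B → ℝ}

lemma sum_codeword_eq_slice
    (hlaw : ∀ (m : ∀ j, κ j) (z : Ω₀ × (∀ j, A j) × B),
      ∑ ω with ω.1 = z.1 ∧ (∀ j, ω.2.1 j (m j) = z.2.1 j) ∧ ω.2.2 = z.2.2, μ ω =
        q0 z.1 * (∏ j, qj j z.1 (z.2.1 j)) * qB z.1 z.2.2)
    (a : Ω₀) (b : B) (m : ∀ j, κ j) (x : ∀ j, A j) :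
    ∑ w with codeword w m = x, μ (a, w, b) = q0 a * qB a b * ∏ j, qj j a (x j) := by
  rw [mul_right_comm, ← hlaw m (a, x, b)]
  exact (sum_filter_slice μ a b _ fun ω => by rw [funext_iff]; rfl).symm

lemma sliceMass_eq_of_law [∀ j, Nonempty (κ j)]
    (hlaw : ∀ (m : ∀ j, κ j) (z : Ω₀ × (∀ j, A j) × B),
      ∑ ω with ω.1 = z.1 ∧ (∀ j, ω.2.1 j (m j) = z.2.1 j) ∧ ω.2.2 = z.2.2, μ ω =
        q0 z.1 * (∏ j, qj j z.1 (z.2.1 j)) * qB z.1 z.2.2)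
    (hqj_sum : ∀ j, q0 a * ∑ x, qj j a x = q0 a) :
    sliceMass μ a b = q0 a * qB a b := by
  have m : ∀ j, κ j := Classical.arbitrary _
  calc sliceMass μ a b = ∑ x, ∑ w with codeword w m = x, μ (a, w, b) := (sum_fiberwise _ _ _).symm
    _ = q0 a * qB a b * ∑ x : ∀ j, A j, ∏ j, qj j a (x j) := by
        simp only [sum_codeword_eq_slice hlaw, mul_sum]
    _ = q0 a * qB a b * ∏ j, ∑ x, qj j a x := by rw [prod_univ_sum, Fintype.piFinset_univ]
    _ = q0 a * qB a b := by
        rcases eq_or_ne (q0 a) 0 with h0 | h0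
        · simp [h0]
        · simp [(mul_eq_left₀ h0).1 (hqj_sum _)]

lemma isCodebookLaw_condSlice (hμ : ∀ ω, 0 ≤ μ ω)
    (hlaw : ∀ (m : ∀ j, κ j) (z : Ω₀ × (∀ j, A j) × B),
      ∑ ω with ω.1 = z.1 ∧ (∀ j, ω.2.1 j (m j) = z.2.1 j) ∧ ω.2.2 = z.2.2, μ ω =
        q0 z.1 * (∏ j, qj j z.1 (z.2.1 j)) * qB z.1 z.2.2)
    (hpairlaw : ∀ m m' : ∀ j, κ j, m ≠ m' →
      ∀ (z : Ω₀ × (∀ j, A j) × B) (x' : ∀ j, A j), (∀ j, m j = m' j → z.2.1 j = x' j) →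
      ∑ ω with ω.1 = z.1 ∧ (∀ j, ω.2.1 j (m j) = z.2.1 j) ∧
          (∀ j, ω.2.1 j (m' j) = x' j) ∧ ω.2.2 = z.2.2, μ ω =
        q0 z.1 * qB z.1 z.2.2 * (∏ j, qj j z.1 (z.2.1 j)) *
          ∏ j with m j ≠ m' j, qj j z.1 (x' j))
    (hmass : sliceMass μ a b = q0 a * qB a b) (hmass_ne : sliceMass μ a b ≠ 0) :
    IsCodebookLaw (fun j => qj j a) (condSlice μ a b) where
  nonneg := condSlice_nonneg hμ
  sum_eq_one := sum_condSlice_eq_one hmass_ne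
  pair_law m m' x x' hagree := by
    rw [sum_condSlice, div_eq_iff hmass_ne, hmass, mul_comm]
    rcases eq_or_ne m m' with rfl | hne
    · obtain rfl : x' = x := funext fun j => hagree j (mem_agreementSet.2 rfl)
      simp [agreementSet, sum_codeword_eq_slice hlaw]
    · have hcompl : (agreementSet m m')ᶜ = univ.filter fun j => m j ≠ m' j := by
        ext j
        simp [mem_agreementSet]
      rw [hcompl, ← mul_assoc, ← hpairlaw m m' hne (a, x, b) x' fun j hj =>
        (hagree j (mem_agreementSet.2 hj)).symm]
      refine (sum_filter_slice μ a b _ fun ω => ?_).symm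
      rw [funext_iff, funext_iff, and_assoc]
      rfl

end Conditioning

open scoped Classical in
/-- **Unconditional covering upper bound.**  Under Assumption I on the
codebook structure, for any `0 < ε < 1`,
`P(Z = 0) ≤ (1/ε)·P(Fᶜ) + (1/(1−ε))·|M|⁻¹·e^γ
  + (1/(1−ε))²·∑_{∅⊊S⊊[k]} |M_S|⁻¹·e^{−α_S − 2β_{Sᶜ} + 2γ}`,
where `Z` counts the `m ∈ M = ∏_j [M_j]` with
`(U₀, U₁(m₁),…,U_k(m_k), U_{k+1}) ∈ F`, `P(Fᶜ)` is computed under the true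
joint pmf `p`, and `γ, α_S, β_{Sᶜ}` are the change-of-measure constants. -/
theorem covering_stmt16
    {k : ℕ} {Ω₀ B : Type*} {A : Fin k → Type*}
    [Fintype Ω₀] [Fintype B] [∀ j, Fintype (A j)]
    [DecidableEq Ω₀] [DecidableEq B] [∀ j, DecidableEq (A j)]
    (p : Ω₀ × (∀ j, A j) × B → ℝ)
    (hp0 : ∀ z, 0 ≤ p z) (hp1 : ∑ z, p z = 1)
    (q0 : Ω₀ → ℝ) (qj : ∀ j : Fin k, Ω₀ → A j → ℝ) (qB : Ω₀ → B → ℝ)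
    (hq0 : ∀ u₀, q0 u₀ =
      ∑ z ∈ Finset.univ.filter (fun z : Ω₀ × (∀ j, A j) × B => z.1 = u₀), p z)
    (hqj : ∀ (j : Fin k) u₀ a, 0 ≤ qj j u₀ a ∧ q0 u₀ * qj j u₀ a =
      ∑ z ∈ Finset.univ.filter
        (fun z : Ω₀ × (∀ j, A j) × B => z.1 = u₀ ∧ z.2.1 j = a), p z)
    (hqB : ∀ u₀ b, 0 ≤ qB u₀ b ∧ q0 u₀ * qB u₀ b =
      ∑ z ∈ Finset.univ.filter
        (fun z : Ω₀ × (∀ j, A j) × B => z.1 = u₀ ∧ z.2.2 = b), p z)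
    (M : Fin k → ℕ) (hM : ∀ j, 0 < M j)
    (μ : Ω₀ × (∀ j, Fin (M j) → A j) × B → ℝ)
    (hμ0 : ∀ ω, 0 ≤ μ ω) (hμ1 : ∑ ω, μ ω = 1)
    -- each `m`-indexed tuple has law `p(u₀)·∏_j p(u_j|u₀)·p(u_{k+1}|u₀)`
    (hlaw : ∀ (m : ∀ j, Fin (M j)) (z : Ω₀ × (∀ j, A j) × B),
      ∑ ω ∈ Finset.univ.filter (fun ω : Ω₀ × (∀ j, Fin (M j) → A j) × B =>
          ω.1 = z.1 ∧ (∀ j, ω.2.1 j (m j) = z.2.1 j) ∧ ω.2.2 = z.2.2), μ ω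
        = q0 z.1 * (∏ j, qj j z.1 (z.2.1 j)) * qB z.1 z.2.2)
    -- Assumption I: pairwise joint law of codewords for distinct `m, m'`
    (hpairlaw : ∀ (m m' : ∀ j, Fin (M j)), m ≠ m' →
      ∀ (z : Ω₀ × (∀ j, A j) × B) (x' : ∀ j, A j),
        (∀ j, m j = m' j → z.2.1 j = x' j) →
      ∑ ω ∈ Finset.univ.filter (fun ω : Ω₀ × (∀ j, Fin (M j) → A j) × B =>
          ω.1 = z.1 ∧ (∀ j, ω.2.1 j (m j) = z.2.1 j) ∧
            (∀ j, ω.2.1 j (m' j) = x' j) ∧ ω.2.2 = z.2.2), μ ω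
        = q0 z.1 * qB z.1 z.2.2 * (∏ j, qj j z.1 (z.2.1 j)) *
            ∏ j ∈ Finset.univ.filter (fun j => m j ≠ m' j), qj j z.1 (x' j))
    (F : Set (Ω₀ × (∀ j, A j) × B))
    (γ : ℝ)
    (hγ : ∀ z ∈ F,
      p z ≤ Real.exp γ * (cvMargS p ∅ z * ∏ j, qj j z.1 (z.2.1 j)))
    (α β : Finset (Fin k) → ℝ)
    (hα : ∀ S : Finset (Fin k), S.Nonempty → S ≠ Finset.univ →
      ∀ z ∈ cvProjS F S,
        Real.exp (α S) * (cvMargS p ∅ z * ∏ j ∈ S, qj j z.1 (z.2.1 j))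
          ≤ cvMargS p S z)
    (hβ : ∀ S : Finset (Fin k), S.Nonempty → S ≠ Finset.univ →
      ∀ z ∈ F,
        Real.exp (β Sᶜ) * (cvMargS p S z * ∏ j ∈ Sᶜ, qj j z.1 (z.2.1 j))
          ≤ p z)
    (ε : ℝ) (hε0 : 0 < ε) (hε1 : ε < 1) :
    ∑ ω ∈ Finset.univ.filter (fun ω : Ω₀ × (∀ j, Fin (M j) → A j) × B =>
        ∀ m : ∀ j, Fin (M j), (ω.1, fun j => ω.2.1 j (m j), ω.2.2) ∉ F), μ ω
    ≤ (1 / ε) * (∑ z ∈ Finset.univ.filter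
          (fun z : Ω₀ × (∀ j, A j) × B => z ∉ F), p z)
      + (1 / (1 - ε)) * (∏ j, (M j : ℝ))⁻¹ * Real.exp γ
      + (1 / (1 - ε)) ^ 2 *
        ∑ S ∈ Finset.univ.filter (fun S : Finset (Fin k) =>
            S.Nonempty ∧ S ≠ Finset.univ),
          (∏ j ∈ S, (M j : ℝ))⁻¹ *
            Real.exp (-α S - 2 * β Sᶜ + 2 * γ) := by
  have : ∀ j, Nonempty (Fin (M j)) := fun j => Fin.pos_iff_nonempty.1 (hM j)
  have hqj_sum (a : Ω₀) (j : Fin k) : q0 a * ∑ x, qj j a x = q0 a := by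
    simp_rw [mul_sum, (hqj _ _ _).2, ← filter_filter]
    rw [sum_fiberwise, hq0]
  have hmass_p (a : Ω₀) (b : B) : sliceMass p a b = q0 a * qB a b := by
    rw [(hqB a b).2, sum_filter_slice p a b (fun _ => True) (by simp), filter_true, sliceMass]
  have hmass_μ (a : Ω₀) (b : B) : sliceMass μ a b = sliceMass p a b :=
    (sliceMass_eq_of_law hlaw (hqj_sum a)).trans (hmass_p a b).symm
  have hmass_sum : ∑ i : Ω₀ × B, sliceMass p i.1 i.2 = 1 := by
    simpa [sliceMass, hp1] using (sum_filter_eq_sum_slices p fun _ => True).symm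
  have hfail (i : Ω₀ × B) : 0 ≤ ∑ x with (i.1, x, i.2) ∉ F, p (i.1, x, i.2) :=
    sum_nonneg fun x _ => hp0 _
  rw [add_assoc, sum_filter_eq_sum_slices μ, sum_filter_eq_sum_slices p]
  refine (sum_le_of_le_on_good hε0 (coveringBound_nonneg M γ α β (sub_pos.2 hε1).le) hfail
    (r := fun i => sliceMass p i.1 i.2) (fun i => sum_nonneg fun x _ => hp0 _)
    (fun i => ?_) fun ⟨a, b⟩ hgood => ?_).trans_eq (by rw [hmass_sum, one_mul, coveringBound])
  · exact (sum_le_univ_sum_of_nonneg fun w => hμ0 _).trans_eq (hmass_μ i.1 i.2)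
  · have hpos : 0 < sliceMass p a b := pos_of_mul_pos_right ((hfail (a, b)).trans_lt hgood) hε0.le
    have hcode := isCodebookLaw_condSlice hμ0 hlaw hpairlaw ((hmass_μ a b).trans (hmass_p a b))
      ((hmass_μ a b).trans_ne hpos.ne')
    simpa only [Fintype.card_fin] using sum_miss_slice_le (fun j x => (hqj j a x).1) hp0 hcode
      (changeOfMeasureBounds_condSlice hpos hγ hα hβ) (hmass_μ a b) hpos hε1 hgood
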